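/- There exists a universal constant K > 0 with the following property (Theorem 5(b) with the adaptive weights made explicit). Let d, m ≥ 1 and n₁,…,n_m ≥ 1 be integers, let n > 0 and β̄ > 0 be reals, Γ > 0, and let C ⊆ ℝ^d be a nonempty compact convex set of Euclidean diameter D > 0. For each i ∈ {1,…,m} and j ∈ {1,…,n_i}, let ℓ_{ij} : ℝ^d → ℝ be convex, differentiable, and Γ-Lipschitz on C; set L_i = ∑_{j=1}^{n_i} ℓ_{ij} and let θ*_i be a minimizer of L_i over C. Define the adaptive weights ω_i = n_i^{-1/4} / √( (∑_{i'=1}^m n_{i'}^{1/2}) / (n β̄) ), set T = ⌈(2/d)·(∑_{i=1}^m n_i²)/(∑_{i=1}^m 1/ω_i²)⌉, let (ξ_i⁽ᵗ⁾)_{i ∈ [m], t ∈ [T]} be independent standard Gaussian random vectors in ℝ^d, let θ_i⁽⁰⁾ ∈ C be deterministic, and define θ_i⁽ᵗ⁾ = Π_C( θ_i⁽ᵗ⁻¹⁾ − η_i⁽ᵗ⁾( ω_i ∇L_i(θ_i⁽ᵗ⁻¹⁾) + Γ√(T/2)·ξ_i⁽ᵗ⁾ ) ) with η_i⁽ᵗ⁾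 = D/( Γ·√(ω_i² n_i² + T d/2) · √t ). Then ∑_{i=1}^m E[L_i(θ_i⁽ᵀ⁾)] − ∑_{i=1}^m L_i(θ*_i) ≤ K · D · Γ · (1 + log T) · √( m d / (n β̄) ) · ∑_{i=1}^m n_i^{1/2}. -/

import Mathlib

open MeasureTheory ProbabilityTheory


theorem sum_lemma (x e : ℕ → ℝ) (s T : ℕ) (he : ∀ t, s ≤ t → t ≤ T → e t ≤ 1)
    (h0 : ∀ t, s ≤ t → t ≤ T → 0 ≤ e t)
    (hx : ∀ t, s ≤ t → t < T →
      x t ≤ Real.sqrt (t+1) / 2 * (e t - e (t+1)) + 1 / (2 * Real.sqrt (t+1))) :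
    ∀ n, s ≤ n → n ≤ T → ∑ t ∈ Finset.Ico s n, x t ≤ 
      Real.sqrt s / 2 * e s - Real.sqrt n / 2 * e n + 3/2 * (Real.sqrt n - Real.sqrt s) := by
  intro n hn
  induction n, hn using Nat.le_induction with
  | base => intro _; simp
  | succ n hn ih =>
    intro hT
    rw [Finset.sum_Ico_succ_top hn]
    have h1 := ih (by omega)
    have h2 := hx n hn (by omega)
    have h3 := he n hn (by omega)
    push_cast
    have hp : 0 < Real.sqrt ((n:ℝ)+1) := Real.sqrt_pos.2 (by positivity)
    have hs : Real.sqrt (n:ℝ) ≤ Real.sqrt ((n:ℝ)+1) := Real.sqrt_le_sqrt (by linarith)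
    have h4 : 1 / (2 * Real.sqrt ((n:ℝ)+1)) ≤ Real.sqrt ((n:ℝ)+1) - Real.sqrt n := by
      rw [div_le_iff₀ (by positivity)]
      have a1 := Real.sq_sqrt (show (0:ℝ) ≤ n by positivity)
      have a2 := Real.sq_sqrt (show (0:ℝ) ≤ n+1 by positivity)
      nlinarith [sq_nonneg (Real.sqrt ((n:ℝ)+1) - Real.sqrt n)]
    nlinarith [mul_nonneg (sub_nonneg.2 hs) (sub_nonneg.2 h3)]

theorem last_lemma (A : ℕ → ℝ) (e : ℕ → ℕ → ℝ) (b : ℕ → ℝ) (T : ℕ) (hT : 1 ≤ T)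
    (he : ∀ s t, s ≤ t → t ≤ T → e s t ≤ 1)
    (he0 : ∀ s t, s ≤ t → t ≤ T → 0 ≤ e s t) (hss : ∀ s, e s s = 0)
    (hb : ∀ t, t ≤ T → b t ≤ 1) (hb0 : ∀ t, t ≤ T → 0 ≤ b t)
    (h1 : ∀ s t, s ≤ t → t < T →
      A t - A s ≤ Real.sqrt (t+1) / 2 * (e s t - e s (t+1)) + 1 / (2 * Real.sqrt (t+1)))
    (h2 : ∀ t, t < T →
      A t ≤ Real.sqrt (t+1) / 2 * (b t - b (t+1)) + 1 / (2 * Real.sqrt (t+1))) :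
    A (T-1) ≤ 3/2 / Real.sqrt T * (2 + Real.log T) := by
  have hTp : 0 < Real.sqrt (T:ℝ) := Real.sqrt_pos.2 (by exact_mod_cast hT)
  have hTs := Real.sq_sqrt (show (0:ℝ) ≤ T by positivity)
  set c := 3/2 / Real.sqrt T with hc
  have hc0 : 0 < c := by positivity
  have hcT : c * T = 3/2 * Real.sqrt T := by
    rw [hc]; field_simp; linarith
  have hS : ∀ k, k ≤ T → (∑ t ∈ Finset.Ico (T-k) T, A t) - k * A (T-k) ≤ c * k := by
    intro k hk
    have := sum_lemma (fun t => A t - A (T-k)) (e (T-k)) (T-k) T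
      (fun t h h' => he _ t h h') (fun t h h' => he0 _ t h h')
      (fun t h h' => h1 _ t h h') T (by omega) le_rfl
    rw [Finset.sum_sub_distrib] at this
    simp only [Finset.sum_const, Nat.card_Ico, nsmul_eq_mul, hss] at this
    have hkk : T - (T-k) = k := by omega
    rw [hkk] at this
    have h3 := he0 (T-k) T (by omega) le_rfl
    have h4 : 3/2 * (Real.sqrt T - Real.sqrt ((T-k : ℕ):ℝ)) ≤ c * k := by
      have hck : c * k = (3/2 * k) / Real.sqrt T := by rw [hc]; ring
      rw [hck, le_div_iff₀ hTp]
      have a1 := Real.sq_sqrt (show (0:ℝ) ≤ ((T-k : ℕ):ℝ) by positivity)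
      have a2 : Real.sqrt ((T-k : ℕ):ℝ) ≤ Real.sqrt T :=
        Real.sqrt_le_sqrt (by exact_mod_cast Nat.sub_le _ _)
      have a3 : ((T-k : ℕ):ℝ) = T - k := by push_cast [hk]; ring
      rw [a3] at a1 a2 ⊢
      nlinarith [Real.sqrt_nonneg ((T:ℝ)-k)]
    nlinarith [mul_nonneg hTp.le h3]
  have hfull : (∑ t ∈ Finset.Ico 0 T, A t) ≤ c * T := by
    have := sum_lemma A b 0 T (fun t _ h' => hb t h') (fun t _ h' => hb0 t h')
      (fun t _ h' => h2 t h') T (by omega) le_rfl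
    simp only [Nat.cast_zero, Real.sqrt_zero] at this
    nlinarith [mul_nonneg hTp.le (hb0 T le_rfl)]
  have hind : ∀ k, k + 1 ≤ T → A (T-1) ≤
      (∑ t ∈ Finset.Ico (T-(k+1)) T, A t) / ((k:ℝ)+1) + c * (harmonic k : ℝ) := by
    intro k
    induction k with
    | zero =>
      intro _
      have : Finset.Ico (T-(0+1)) T = {T-1} := by ext; simp; omega
      rw [this]; simp
    | succ k ih =>
      intro hk
      refine (ih (by omega)).trans ?_
      have h3 := hS (k+2) (by omega)
      have h4 : (∑ t ∈ Finset.Ico (T-(k+2)) T, A t) = A (T-(k+2)) +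
          ∑ t ∈ Finset.Ico (T-(k+1)) T, A t := by
        rw [Finset.sum_eq_sum_Ico_succ_bot (by omega)]
        congr 3; omega
      rw [show k+1+1 = k+2 by ring]
      rw [h4] at h3 ⊢
      rw [harmonic_succ]
      push_cast at h3 ⊢
      generalize (∑ t ∈ Finset.Ico (T-(k+1)) T, A t) = S at *
      generalize A (T-(k+2)) = y at *
      have hk1 : (0:ℝ) < k+1 := by positivity
      have hk2 : (0:ℝ) < k+1+1 := by positivity
      have : S/((k:ℝ)+1) ≤ (y+S)/((k:ℝ)+1+1) + c * ((k:ℝ)+1)⁻¹ := by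
        rw [← div_eq_mul_inv, div_add_div _ _ hk2.ne' hk1.ne', div_le_div_iff₀ hk1 (by positivity)]
        nlinarith
      linarith
  have h5 := hind (T-1) (by omega)
  have h6 : T - (T-1+1) = 0 := by omega
  rw [h6] at h5
  have h7 : ((T-1:ℕ):ℝ)+1 = T := by
    have : T - 1 + 1 = T := by omega
    exact_mod_cast this
  rw [h7] at h5
  have hT0 : (0:ℝ) < T := by exact_mod_cast hT
  have h8 : (∑ t ∈ Finset.Ico 0 T, A t) / T ≤ c := by
    rw [div_le_iff₀ hT0]; exact hfull
  have h9 : (harmonic (T-1) : ℝ) ≤ 1 + Real.log T := by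
    refine le_trans ?_ (harmonic_le_one_add_log T)
    have : T = (T-1)+1 := by omega
    have h : harmonic T = harmonic (T-1) + (((T-1+1:ℕ):ℚ))⁻¹ := by
      conv_lhs => rw [this]
      rw [harmonic_succ]
    rw [h]; push_cast; 
    have : (0:ℝ) ≤ (((T-1:ℕ):ℝ)+1)⁻¹ := by positivity
    linarith
  nlinarith

section
variable {E : Type*} [NormedAddCommGroup E] [InnerProductSpace ℝ E] [FiniteDimensional ℝ E]

theorem proj_var {C : Set E} (hC : Convex ℝ C) (proj : E → E)
    (hp : ∀ x, proj x ∈ C ∧ ∀ y ∈ C, ‖x - proj x‖ ≤ ‖x - y‖) (x y : E) (hy : y ∈ C) :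
    inner ℝ (x - proj x) (y - proj x) ≤ 0 := by
  have h := (norm_eq_iInf_iff_real_inner_le_zero hC (u := x) (hp x).1).1
  refine h ?_ y hy
  haveI : Nonempty C := ⟨⟨_, (hp x).1⟩⟩
  apply le_antisymm
  · exact le_ciInf fun w => (hp x).2 w w.2
  · exact ciInf_le (f := fun w : C => ‖x - w‖) ⟨0, by rintro _ ⟨w, rfl⟩; positivity⟩ ⟨_, (hp x).1⟩

theorem proj_lip {C : Set E} (hC : Convex ℝ C) (proj : E → E)
    (hp : ∀ x, proj x ∈ C ∧ ∀ y ∈ C, ‖x - proj x‖ ≤ ‖x - y‖) : Continuous proj := by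
  have : LipschitzWith 1 proj := by
    apply LipschitzWith.of_dist_le_mul
    intro x y
    have h1 := proj_var hC proj hp x (proj y) (hp y).1
    have h2 := proj_var hC proj hp y (proj x) (hp x).1
    rw [dist_eq_norm, dist_eq_norm]
    have h3 : ‖proj x - proj y‖^2 ≤ inner ℝ (x - y) (proj x - proj y) := by
      rw [← real_inner_self_eq_norm_sq]
      simp only [inner_sub_left, inner_sub_right] at *
      have := real_inner_comm (proj x) (proj y)
      linarith
    have h4 := real_inner_le_norm (x-y) (proj x - proj y)
    simp only [NNReal.coe_one, one_mul]
    by_contra! hlt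
    nlinarith [norm_nonneg (x-y)]
  exact this.continuous

theorem proj_step {C : Set E} (hC : Convex ℝ C) (proj : E → E)
    (hp : ∀ x, proj x ∈ C ∧ ∀ y ∈ C, ‖x - proj x‖ ≤ ‖x - y‖) (θ u h : E) (hθ : θ ∈ C)
    (hu : u ∈ C) :
    ‖proj (θ - h) - u‖^2 ≤ ‖θ - u‖^2 - 2 * inner ℝ h (θ - u)
      + ‖(vectorSpan ℝ C).starProjection h‖^2 := by
  have h1 := proj_var hC proj hp (θ - h) u hu
  have hp1 := (hp (θ - h)).1
  set θ' := proj (θ - h)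
  set P := (vectorSpan ℝ C).starProjection
  have key : ∀ a ∈ C, ∀ b ∈ C, inner ℝ h (a - b) = inner ℝ (P h) (a - b) := by
    intro a ha b hb
    have : P (a - b) = a - b := 
      Submodule.starProjection_eq_self_iff.2 (vsub_mem_vectorSpan ℝ ha hb)
    rw [Submodule.inner_starProjection_left_eq_right, this]
  rw [key θ hθ u hu]
  have e1 : θ - h - θ' = (θ - θ') - h := by abel
  rw [e1, inner_sub_left, key u hu θ' hp1] at h1
  have e2 : 0 ≤ ‖(θ - θ') - P h‖^2 := by positivity
  have e3 : θ' - u = (θ - u) - (θ - θ') := by abel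
  have e4 : u - θ' = (θ - θ') - (θ - u) := by abel
  rw [e3]
  rw [e4] at h1
  rw [@norm_sub_sq_real] at *
  generalize θ - θ' = a at *
  generalize θ - u = b at *
  simp only [inner_sub_right, real_inner_self_eq_norm_sq] at *
  have := real_inner_comm a b
  have := real_inner_comm a (P h)
  linarith

theorem convex_grad {f : E → ℝ} (hf : ConvexOn ℝ Set.univ f) (hd : Differentiable ℝ f) (x v : E) :
    inner ℝ (gradient f x) v ≤ f (x + v) - f x := by
  rw [inner_gradient_left]
  let g : ℝ → ℝ := fun s => f (x + s • v)
  have hg : HasDerivAt g (fderiv ℝ f x v) 0 := by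
    have h1 : HasDerivAt (fun s : ℝ => x + s • v) v 0 := by
      simpa using ((hasDerivAt_id (0:ℝ)).smul_const v).const_add x
    have h2 : HasFDerivAt f (fderiv ℝ f x) (x + (0:ℝ) • v) := by
      simpa using (hd x).hasFDerivAt
    exact h2.comp_hasDerivAt (0:ℝ) h1
  have hc : ConvexOn ℝ Set.univ g := by
    refine ⟨convex_univ, ?_⟩
    intro a _ b _ p q hp hq hpq
    have := hf.2 (Set.mem_univ (x + a • v)) (Set.mem_univ (x + b • v)) hp hq hpq
    refine le_trans (le_of_eq ?_) this
    show f _ = f _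
    congr 1
    have : x = p • x + q • x := by rw [← add_smul, hpq, one_smul]
    conv_lhs => rw [this]
    simp only [smul_eq_mul]
    module
  have := hc.le_slope_of_hasDerivAt (Set.mem_univ 0) (Set.mem_univ 1) zero_lt_one hg
  simpa [slope, g] using this

theorem grad_bound {C : Set E} (hC : Convex ℝ C) {f : E → ℝ} (hf : ConvexOn ℝ Set.univ f)
    (hd : Differentiable ℝ f) {M : ℝ} (hM : 0 ≤ M)
    (hl : ∀ x ∈ C, ∀ y ∈ C, |f x - f y| ≤ M * ‖x - y‖)
    (x : E) (hx : x ∈ C) : ‖(vectorSpan ℝ C).starProjection (gradient f x)‖ ≤ M := by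
  obtain ⟨z, hz⟩ := (Set.Nonempty.intrinsicInterior hC ⟨x, hx⟩)
  rw [mem_intrinsicInterior] at hz
  obtain ⟨⟨z, hza⟩, hz, rfl⟩ := hz
  rw [mem_interior_iff_mem_nhds, Metric.mem_nhds_iff] at hz
  obtain ⟨r, hr, hb⟩ := hz
  have hzC : ∀ v ∈ vectorSpan ℝ C, ‖v‖ < r → z + v ∈ C := by
    intro v hv hvr
    have hm : v +ᵥ z ∈ affineSpan ℝ C := by
      refine AffineSubspace.vadd_mem_of_mem_direction ?_ hza
      rwa [direction_affineSpan]
    have : (⟨v +ᵥ z, hm⟩ : affineSpan ℝ C) ∈ Metric.ball (⟨z, hza⟩ : affineSpan ℝ C) r := by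
      rw [Metric.mem_ball, Subtype.dist_eq]
      simpa using hvr
    have := hb this
    simpa [add_comm] using this
  -- main inequality
  have main : ∀ v ∈ vectorSpan ℝ C, f x - f (x - v) ≤ M * ‖v‖ := by
    intro v hv
    -- relative interior version
    have hint : ∀ ε ∈ Set.Ioo (0:ℝ) 1, f ((1-ε) • x + ε • z) - f ((1-ε) • x + ε • z - v) ≤ M * ‖v‖ := by
      rintro ε ⟨h0, h1⟩
      set y := (1-ε) • x + ε • z with hy
      -- pick small s
      set s := r / (2 * (‖v‖ + 1)) with hs
      have hs0 : 0 < s := by positivity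
      have hsv : ‖s • v‖ < r := by
        rw [norm_smul, Real.norm_of_nonneg hs0.le, hs, div_mul_eq_mul_div, div_lt_iff₀ (by positivity)]
        nlinarith [norm_nonneg v]
      have hyC : y ∈ C := hC hx (by simpa using hzC 0 (Submodule.zero_mem _) (by simpa using hr))
        (by linarith) h0.le (by ring)
      have hy2 : y + (ε * s) • v ∈ C := by
        have := hC hx (hzC _ (Submodule.smul_mem _ s hv) hsv) (by linarith) h0.le
          (show (1 - ε) + ε = 1 by ring)
        convert this using 1
        rw [hy]; module
      have a1 := convex_grad hf hd y ((ε * s) • v)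
      have a2 := convex_grad hf hd y (-v)
      have a3 := (abs_le.1 (hl _ hy2 _ hyC)).2
      have hes : 0 < ε * s := by positivity
      rw [inner_smul_right] at a1
      rw [inner_neg_right, ← sub_eq_add_neg] at a2
      rw [add_sub_cancel_left, norm_smul, Real.norm_of_nonneg hes.le] at a3
      have a4 : inner ℝ (gradient f y) v ≤ M * ‖v‖ := by
        have : (ε * s) * inner ℝ (gradient f y) v ≤ (ε * s) * (M * ‖v‖) := by nlinarith
        exact le_of_mul_le_mul_left this hes
      linarith
    have hcf := hd.continuous
    have hcont : Continuous fun ε : ℝ => f ((1-ε) • x + ε • z) - f ((1-ε) • x + ε • z - v) := by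
      fun_prop
    have ht := (hcont.tendsto 0).mono_left (nhdsWithin_le_nhds (s := Set.Ioi 0))
    simp only [sub_zero, one_smul, zero_smul, add_zero] at ht
    refine le_of_tendsto ht ?_
    filter_upwards [Ioo_mem_nhdsGT (zero_lt_one' ℝ)] with ε hε using hint ε hε
  set p := (vectorSpan ℝ C).starProjection (gradient f x) with hpdef
  have hpV : p ∈ vectorSpan ℝ C := Submodule.starProjection_apply_mem _ _
  have hip : inner ℝ (gradient f x) p = ‖p‖^2 := by
    have : (vectorSpan ℝ C).starProjection p = p := Submodule.starProjection_eq_self_iff.2 hpV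
    rw [← this, ← Submodule.inner_starProjection_left_eq_right, this,
      ← hpdef, real_inner_self_eq_norm_sq]
  -- derivative of s ↦ f (x - s p)
  have hg : HasDerivAt (fun s : ℝ => f (x - s • p)) (-(‖p‖^2)) 0 := by
    have h1 : HasDerivAt (fun s : ℝ => x - s • p) (-p) 0 := by
      simpa using ((hasDerivAt_id (0:ℝ)).smul_const p).const_sub x
    have h2 : HasFDerivAt f (fderiv ℝ f x) (x - (0:ℝ) • p) := by
      simpa using (hd x).hasFDerivAt
    have := h2.comp_hasDerivAt (0:ℝ) h1
    rw [map_neg, ← inner_gradient_left, hip] at this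
    exact this
  have ht := hg.tendsto_slope_zero_right
  have : -(M * ‖p‖) ≤ -(‖p‖^2) := by
    refine ge_of_tendsto ht ?_
    filter_upwards [self_mem_nhdsWithin] with s hs
    have hs : 0 < s := hs
    have := main (s • p) (Submodule.smul_mem _ _ hpV)
    rw [norm_smul, Real.norm_of_nonneg hs.le] at this
    simp only [zero_add, zero_smul, sub_zero, smul_eq_mul]
    rw [inv_mul_eq_div, le_div_iff₀ hs]
    linarith
  by_contra! hlt
  nlinarith [norm_nonneg p]

end

section
variable {d T : ℕ} {Ω : Type} [MeasurableSpace Ω] {μ : Measure Ω} [IsProbabilityMeasure μ]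
  {ξ : Fin T → Ω → EuclideanSpace ℝ (Fin d)}

/-- the sigma-algebra generated by the first `t` noise vectors -/
def pastSigma (ξ : Fin T → Ω → EuclideanSpace ℝ (Fin d)) (t : ℕ) : MeasurableSpace Ω :=
  ⨆ p ∈ {p : Fin T × Fin d | (p.1 : ℕ) < t},
    MeasurableSpace.comap (fun ω => ξ p.1 ω p.2) inferInstance

theorem pastSigma_mono {s t : ℕ} (h : s ≤ t) : pastSigma ξ s ≤ pastSigma ξ t :=
  biSup_mono fun p hp => lt_of_lt_of_le hp h

theorem coord_meas (hξ : ∀ t, Measurable (ξ t)) (p : Fin T × Fin d) :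
    Measurable (fun ω => ξ p.1 ω p.2) := by
  have := hξ p.1
  fun_prop

theorem pastSigma_le (hξ : ∀ t, Measurable (ξ t)) (t : ℕ) :
    pastSigma ξ t ≤ (inferInstance : MeasurableSpace Ω) :=
  iSup₂_le fun p _ => (coord_meas hξ p).comap_le

theorem noise_meas (t : Fin T) : Measurable[pastSigma ξ (t+1)] (ξ t) := by
  have h : ∀ k, Measurable[pastSigma ξ (t+1)] (fun ω => ξ t ω k) := by
    intro k
    rw [measurable_iff_comap_le]
    exact le_iSup₂_of_le (f := fun (p : Fin T × Fin d) (_ : p ∈ {p : Fin T × Fin d | (p.1 : ℕ) < t+1}) =>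
      MeasurableSpace.comap (fun ω => ξ p.1 ω p.2) inferInstance) (t, k) (by simp) le_rfl
  letI := pastSigma ξ (t+1)
  have : Measurable fun ω => (WithLp.ofLp (ξ t ω)) := measurable_pi_lambda _ h
  exact (WithLp.measurable_toLp 2 _).comp this

theorem noise_indep (hξ : ∀ t, Measurable (ξ t))
    (hind : iIndepFun (fun p : Fin T × Fin d => fun ω => ξ p.1 ω p.2) μ) (t : Fin T) (k : Fin d)
    (X : Ω → ℝ) (hX : Measurable[pastSigma ξ t] X) :
    IndepFun X (fun ω => ξ t ω k) μ := by
  have h := indep_iSup_of_disjoint (fun p => (coord_meas hξ p).comap_le)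
    (show iIndep _ μ from hind)
    (S := {p : Fin T × Fin d | (p.1 : ℕ) < t}) (T := {(t,k)}) (by simp)
  rw [IndepFun_iff_Indep]
  refine indep_of_indep_of_le_right (indep_of_indep_of_le_left h hX.comap_le) ?_
  simp

theorem noise_memLp (hξ : ∀ t, Measurable (ξ t))
    (hg : ∀ t k, Measure.map (fun ω => ξ t ω k) μ = gaussianReal 0 1) (t : Fin T) (k : Fin d) :
    MemLp (fun ω => ξ t ω k) 2 μ := by
  have h := memLp_id_gaussianReal (μ := 0) (v := 1) 2
  rw [← hg t k] at h
  exact (memLp_map_measure_iff (by fun_prop) (coord_meas hξ (t,k)).aemeasurable).1 h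

theorem noise_mean (hξ : ∀ t, Measurable (ξ t))
    (hg : ∀ t k, Measure.map (fun ω => ξ t ω k) μ = gaussianReal 0 1) (t : Fin T) (k : Fin d) :
    ∫ ω, ξ t ω k ∂μ = 0 := by
  have h := integral_id_gaussianReal (μ := 0) (v := 1)
  rw [← hg t k, integral_map (coord_meas hξ (t,k)).aemeasurable (by fun_prop)] at h
  exact h

theorem noise_var (hξ : ∀ t, Measurable (ξ t))
    (hg : ∀ t k, Measure.map (fun ω => ξ t ω k) μ = gaussianReal 0 1) (t : Fin T) (k : Fin d) :
    ∫ ω, (ξ t ω k)^2 ∂μ = 1 := by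
  have h := variance_id_gaussianReal (μ := 0) (v := 1)
  rw [variance_of_integral_eq_zero (by fun_prop) (by simp), ← hg t k,
    integral_map (coord_meas hξ (t,k)).aemeasurable (by fun_prop)] at h
  simpa using h

theorem noise_norm (hξ : ∀ t, Measurable (ξ t))
    (hg : ∀ t k, Measure.map (fun ω => ξ t ω k) μ = gaussianReal 0 1) (t : Fin T) :
    Integrable (fun ω => ‖ξ t ω‖^2) μ ∧ ∫ ω, ‖ξ t ω‖^2 ∂μ = d := by
  simp only [EuclideanSpace.real_norm_sq_eq]
  have hi : ∀ k ∈ Finset.univ, Integrable (fun ω => (ξ t ω k)^2) μ :=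
    fun k _ => (noise_memLp hξ hg t k).integrable_sq
  refine ⟨integrable_finsetSum _ hi, ?_⟩
  rw [integral_finsetSum _ hi]
  simp [noise_var hξ hg]

theorem noise_inner (hξ : ∀ t, Measurable (ξ t))
    (hind : iIndepFun (fun p : Fin T × Fin d => fun ω => ξ p.1 ω p.2) μ)
    (hg : ∀ t k, Measure.map (fun ω => ξ t ω k) μ = gaussianReal 0 1) (t : Fin T)
    (X : Ω → EuclideanSpace ℝ (Fin d)) (hX : Measurable[pastSigma ξ t] X) (B : ℝ)
    (hB : ∀ ω, ‖X ω‖ ≤ B) :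
    Integrable (fun ω => inner ℝ (X ω) (ξ t ω)) μ ∧ ∫ ω, inner ℝ (X ω) (ξ t ω) ∂μ = 0 := by
  have e : ∀ ω, inner ℝ (X ω) (ξ t ω) = ∑ k, X ω k * ξ t ω k := by
    intro ω; rw [PiLp.inner_apply]; simp [mul_comm]
  simp only [e]
  have hXk : ∀ k, Measurable[pastSigma ξ t] (fun ω => X ω k) := by
    intro k
    exact (show Measurable (fun x : EuclideanSpace ℝ (Fin d) => x k) by fun_prop).comp hX
  have hXk' : ∀ k, Measurable (fun ω => X ω k) := fun k => (hXk k).mono (pastSigma_le hξ t) le_rfl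
  have hi : ∀ k ∈ Finset.univ, Integrable (fun ω => X ω k * ξ t ω k) μ := by
    intro k _
    refine ((noise_memLp hξ hg t k).integrable (by norm_num)).bdd_mul
      (hXk' k).aestronglyMeasurable (c := B) (Filter.Eventually.of_forall fun ω => ?_)
    exact (PiLp.norm_apply_le (X ω) k).trans (hB ω)
  refine ⟨integrable_finsetSum _ hi, ?_⟩
  rw [integral_finsetSum _ hi]
  refine Finset.sum_eq_zero fun k _ => ?_
  rw [(noise_indep hξ hind t k _ (hXk k)).integral_fun_mul_eq_mul_integral
    (hXk' k).aestronglyMeasurable (coord_meas hξ (t,k)).aestronglyMeasurable, noise_mean hξ hg]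
  simp

end

theorem step_path {d : ℕ} {C : Set (EuclideanSpace ℝ (Fin d))} (hC : Convex ℝ C)
    (proj : EuclideanSpace ℝ (Fin d) → EuclideanSpace ℝ (Fin d))
    (hp : ∀ x, proj x ∈ C ∧ ∀ y ∈ C, ‖x - proj x‖ ≤ ‖x - y‖)
    {f : EuclideanSpace ℝ (Fin d) → ℝ} (hf : ConvexOn ℝ Set.univ f)
    (hd : Differentiable ℝ f) {M : ℝ} (hM : 0 ≤ M)
    (hl : ∀ x ∈ C, ∀ y ∈ C, |f x - f y| ≤ M * ‖x - y‖)
    (x u z : EuclideanSpace ℝ (Fin d)) (hx : x ∈ C) (hu : u ∈ C) (η w σ : ℝ) (hη : 0 ≤ η)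
    (hw : 0 ≤ w) :
    ‖proj (x - η • (w • gradient f x + σ • z)) - u‖^2 ≤
      ‖x - u‖^2 - 2 * η * w * (f x - f u) - 2 * η * σ * inner ℝ (x - u) z
        + η^2 * (w^2 * M^2 +
          2 * w * σ * inner ℝ ((vectorSpan ℝ C).starProjection (gradient f x)) z
          + σ^2 * ‖z‖^2) := by
  have h1 := proj_step hC proj hp x u (η • (w • gradient f x + σ • z)) hx hu
  have h2 := grad_bound hC hf hd hM hl x hx
  have h3 := convex_grad hf hd x (u - x)
  have h3' : f x - f u ≤ inner ℝ (gradient f x) (x - u) := by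
    rw [← neg_sub x u, inner_neg_right] at h3
    simp only [neg_sub, add_sub_cancel] at h3
    linarith
  set P := (vectorSpan ℝ C).starProjection
  set g := gradient f x
  have h4 : ‖P (η • (w • g + σ • z))‖^2 = η^2 * (w^2 * ‖P g‖^2 + 2 * w * σ * inner ℝ (P g) z
      + σ^2 * ‖P z‖^2) := by
    rw [map_smul, map_add, map_smul, map_smul, norm_smul, mul_pow, Real.norm_eq_abs, sq_abs,
      norm_add_sq_real, norm_smul, norm_smul, inner_smul_left, inner_smul_right]
    have : inner ℝ (P g) (P z) = inner ℝ (P g) z := by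
      have h5 : P (P g) = P g :=
        Submodule.starProjection_eq_self_iff.2 (Submodule.starProjection_apply_mem _ _)
      rw [← Submodule.inner_starProjection_left_eq_right]
      exact congrArg (fun v => inner ℝ v z) h5
    rw [this, mul_pow, mul_pow, Real.norm_eq_abs, sq_abs, Real.norm_eq_abs, sq_abs]
    simp only [conj_trivial]
    ring
  have h5 : ‖P z‖ ≤ ‖z‖ := Submodule.norm_starProjection_apply_le _ _
  rw [h4] at h1
  rw [inner_smul_left, inner_add_left, inner_smul_left, inner_smul_left,
    real_inner_comm (x - u) z] at h1
  simp only [conj_trivial] at h1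
  have h6 : ‖P z‖^2 ≤ ‖z‖^2 := by gcongr
  have h7 : ‖P g‖^2 ≤ M^2 := by gcongr
  have h8 : η^2 * (w^2 * ‖P g‖^2 + 2 * w * σ * inner ℝ (P g) z + σ^2 * ‖P z‖^2) ≤
      η^2 * (w^2 * M^2 + 2 * w * σ * inner ℝ (P g) z + σ^2 * ‖z‖^2) := by gcongr
  have h9 := mul_le_mul_of_nonneg_left h3' (mul_nonneg hη hw)
  linarith

theorem step_exp {d T : ℕ} {Ω : Type} [MeasurableSpace Ω] {μ : Measure Ω} [IsProbabilityMeasure μ]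
    {ξ : Fin T → Ω → EuclideanSpace ℝ (Fin d)} (hξ : ∀ t, Measurable (ξ t))
    (hind : iIndepFun (fun p : Fin T × Fin d => fun ω => ξ p.1 ω p.2) μ)
    (hg : ∀ t k, Measure.map (fun ω => ξ t ω k) μ = gaussianReal 0 1) (t : Fin T)
    {C : Set (EuclideanSpace ℝ (Fin d))} (hCc : IsCompact C) (hC : Convex ℝ C)
    (proj : EuclideanSpace ℝ (Fin d) → EuclideanSpace ℝ (Fin d))
    (hp : ∀ x, proj x ∈ C ∧ ∀ y ∈ C, ‖x - proj x‖ ≤ ‖x - y‖)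
    {f : EuclideanSpace ℝ (Fin d) → ℝ} (hf : ConvexOn ℝ Set.univ f)
    (hd : Differentiable ℝ f) {M : ℝ} (hM : 0 ≤ M)
    (hl : ∀ x ∈ C, ∀ y ∈ C, |f x - f y| ≤ M * ‖x - y‖)
    (X U : Ω → EuclideanSpace ℝ (Fin d)) (hX : Measurable[pastSigma ξ t] X)
    (hU : Measurable[pastSigma ξ t] U) (hXC : ∀ ω, X ω ∈ C) (hUC : ∀ ω, U ω ∈ C)
    (η w σ : ℝ) (hη : 0 ≤ η) (hw : 0 ≤ w) :
    ∫ ω, ‖proj (X ω - η • (w • gradient f (X ω) + σ • ξ t ω)) - U ω‖^2 ∂μ ≤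
      ∫ ω, ‖X ω - U ω‖^2 ∂μ - 2 * η * w * (∫ ω, f (X ω) ∂μ - ∫ ω, f (U ω) ∂μ)
        + η^2 * (w^2 * M^2 + σ^2 * d) := by
  have hXm : Measurable X := hX.mono (pastSigma_le hξ t) le_rfl
  have hUm : Measurable U := hU.mono (pastSigma_le hξ t) le_rfl
  have hgm : Measurable (gradient f) := by
    unfold gradient
    exact (InnerProductSpace.toDual ℝ
      (EuclideanSpace ℝ (Fin d))).symm.continuous.measurable.comp (measurable_fderiv ℝ f)
  have hpm := (proj_lip hC proj hp).measurable
  have hfc := hd.continuous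
  obtain ⟨B, hB⟩ := hCc.isBounded.exists_norm_le
  obtain ⟨F, hF⟩ := (hCc.image hfc).isBounded.exists_norm_le
  have hdiff : ∀ a ∈ C, ∀ b ∈ C, ‖a - b‖ ≤ 2 * B := fun a ha b hb => by
    have := norm_sub_le a b
    linarith [hB a ha, hB b hb]
  have bint : ∀ Y Z : Ω → EuclideanSpace ℝ (Fin d), Measurable Y → Measurable Z →
      (∀ ω, Y ω ∈ C) → (∀ ω, Z ω ∈ C) → Integrable (fun ω => ‖Y ω - Z ω‖^2) μ := by
    intro Y Z hY hZ hYC hZC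
    refine Integrable.of_bound (C := (2*B)^2) (by fun_prop) (Filter.Eventually.of_forall fun ω => ?_)
    have := hdiff _ (hYC ω) _ (hZC ω)
    rw [norm_pow, norm_norm]
    gcongr
  have fint : ∀ Y : Ω → EuclideanSpace ℝ (Fin d), Measurable Y →
      (∀ ω, Y ω ∈ C) → Integrable (fun ω => f (Y ω)) μ := by
    intro Y hY hYC
    refine Integrable.of_bound (C := F) (hfc.measurable.comp hY).aestronglyMeasurable
      (Filter.Eventually.of_forall fun ω => hF _ ⟨_, hYC ω, rfl⟩)
  have i1 := bint X U hXm hUm hXC hUC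
  have i2 := fint X hXm hXC
  have i3 := fint U hUm hUC
  obtain ⟨i4, e4⟩ := noise_inner hξ hind hg t (fun ω => X ω - U ω) (hX.sub hU) (2*B)
    (fun ω => hdiff _ (hXC ω) _ (hUC ω))
  obtain ⟨i5, e5⟩ := noise_inner hξ hind hg t
    (fun ω => (vectorSpan ℝ C).starProjection (gradient f (X ω)))
    (((vectorSpan ℝ C).starProjection.continuous.measurable.comp hgm).comp hX) M
    (fun ω => grad_bound hC hf hd hM hl _ (hXC ω))
  obtain ⟨i6, e6⟩ := noise_norm hξ hg t
  have hle := integral_mono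
    (bint (fun ω => proj (X ω - η • (w • gradient f (X ω) + σ • ξ t ω))) U
      (by have := hξ t; fun_prop) hUm (fun ω => (hp _).1) hUC)
    (g := fun ω => ‖X ω - U ω‖^2 - 2 * η * w * (f (X ω) - f (U ω))
        - 2 * η * σ * inner ℝ (X ω - U ω) (ξ t ω)
        + η^2 * (w^2 * M^2 +
          2 * w * σ * inner ℝ ((vectorSpan ℝ C).starProjection (gradient f (X ω))) (ξ t ω)
          + σ^2 * ‖ξ t ω‖^2))
    ((((i1.sub ((i2.sub i3).const_mul _)).sub (i4.const_mul _)).add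
      ((((integrable_const _).add (i5.const_mul _)).add (i6.const_mul _)).const_mul _)))
    (fun ω => step_path hC proj hp hf hd hM hl (X ω) (U ω) (ξ t ω) (hXC ω) (hUC ω) η w σ hη hw)
  refine hle.trans (le_of_eq ?_)
  rw [integral_add, integral_sub, integral_sub, integral_const_mul, integral_sub i2 i3,
    integral_const_mul, e4, integral_const_mul, integral_add, integral_add, integral_const_mul,
    integral_const_mul, e5, integral_const_mul, e6]
  · simp
  · exact integrable_const _
  · exact i5.const_mul _
  · exact (integrable_const _).add (i5.const_mul _)
  · exact i6.const_mul _
  · exact i1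
  · exact (i2.sub i3).const_mul _
  · exact i1.sub ((i2.sub i3).const_mul _)
  · exact i4.const_mul _
  · exact (i1.sub ((i2.sub i3).const_mul _)).sub (i4.const_mul _)
  · exact (((integrable_const _).add (i5.const_mul _)).add (i6.const_mul _)).const_mul _

theorem alg_step (I I' D G q w δ : ℝ) (hD : 0 < D) (hG : 0 < G) (hq : 0 < q)
    (h : I' ≤ I - 2 * (D / (G * q)) * w * δ + (D / (G * q))^2 * G^2) :
    w * δ / (D * G) ≤ q / 2 * (I / D^2 - I' / D^2) + 1 / (2 * q) := by
  have h1 : (D / (G * q))^2 * G^2 = D^2 / q^2 := by field_simp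
  rw [h1] at h
  have h2 : w * δ / (D * G) = q / (2 * D^2) * (2 * (D / (G * q)) * w * δ) := by field_simp
  have h3 : q / 2 * (I / D^2 - I' / D^2) + 1 / (2 * q) = q / (2 * D^2) * (I - I' + D^2 / q^2) := by
    field_simp
  rw [h2, h3]
  apply mul_le_mul_of_nonneg_left _ (by positivity)
  linarith

theorem per_i {d T : ℕ} (hT : 1 ≤ T) {Ω : Type} [MeasurableSpace Ω] {μ : Measure Ω}
    [IsProbabilityMeasure μ]
    {ξ : Fin T → Ω → EuclideanSpace ℝ (Fin d)} (hξ : ∀ t, Measurable (ξ t))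
    (hind : iIndepFun (fun p : Fin T × Fin d => fun ω => ξ p.1 ω p.2) μ)
    (hg : ∀ t k, Measure.map (fun ω => ξ t ω k) μ = gaussianReal 0 1)
    {C : Set (EuclideanSpace ℝ (Fin d))} (hCc : IsCompact C) (hC : Convex ℝ C)
    {D : ℝ} (hD : 0 < D) (hdiam : ∀ x ∈ C, ∀ y ∈ C, ‖x - y‖ ≤ D)
    (proj : EuclideanSpace ℝ (Fin d) → EuclideanSpace ℝ (Fin d))
    (hp : ∀ x, proj x ∈ C ∧ ∀ y ∈ C, ‖x - proj x‖ ≤ ‖x - y‖)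
    {f : EuclideanSpace ℝ (Fin d) → ℝ} (hf : ConvexOn ℝ Set.univ f)
    (hd : Differentiable ℝ f) {M : ℝ} (hM : 0 ≤ M)
    (hl : ∀ x ∈ C, ∀ y ∈ C, |f x - f y| ≤ M * ‖x - y‖)
    (u : EuclideanSpace ℝ (Fin d)) (hu : u ∈ C) (w σ G : ℝ) (hw : 0 < w) (hGp : 0 < G)
    (hG : G^2 = w^2 * M^2 + σ^2 * d)
    (θ : ℕ → Ω → EuclideanSpace ℝ (Fin d)) (h0 : ∃ θ0 ∈ C, θ 0 = fun _ => θ0)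
    (hrec : ∀ t : ℕ, (ht : t < T) → θ (t + 1) = fun ω => proj (θ t ω -
        (D / (G * Real.sqrt (t + 1))) • (w • gradient f (θ t ω) + σ • ξ ⟨t, ht⟩ ω))) :
    w * (∫ ω, f (θ T ω) ∂μ - f u) ≤ 4 * D * G * (1 + Real.log T) / Real.sqrt T := by
  have hθC : ∀ t, t ≤ T → ∀ ω, θ t ω ∈ C := by
    intro t ht ω
    cases t with
    | zero => obtain ⟨θ0, h, e⟩ := h0; rw [e]; exact h
    | succ t => rw [hrec t (by omega)]; exact (hp _).1
  have hgm : Measurable (gradient f) := by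
    unfold gradient
    exact (InnerProductSpace.toDual ℝ
      (EuclideanSpace ℝ (Fin d))).symm.continuous.measurable.comp (measurable_fderiv ℝ f)
  have hpm := (proj_lip hC proj hp).measurable
  have hθm : ∀ t, t ≤ T → Measurable[pastSigma ξ t] (θ t) := by
    intro t
    induction t with
    | zero => intro _; obtain ⟨θ0, h, e⟩ := h0; rw [e]; exact measurable_const
    | succ t ih =>
      intro ht
      have m1 : Measurable[pastSigma ξ (t+1)] (θ t) :=
        (ih (by omega)).mono (pastSigma_mono (by omega)) le_rfl
      have m2 : Measurable[pastSigma ξ (t+1)] (ξ ⟨t, by omega⟩) := noise_meas ⟨t, by omega⟩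
      rw [hrec t (by omega)]
      have m3 : Measurable fun q : EuclideanSpace ℝ (Fin d) × EuclideanSpace ℝ (Fin d) =>
          proj (q.1 - (D / (G * Real.sqrt (t + 1))) • (w • gradient f q.1 + σ • q.2)) := by
        fun_prop
      exact m3.comp (m1.prodMk m2)
  have hfc := hd.continuous
  have hθm' : ∀ t, t ≤ T → Measurable (θ t) :=
    fun t ht => (hθm t ht).mono (pastSigma_le hξ t) le_rfl
  obtain ⟨F, hF⟩ := (hCc.image hfc).isBounded.exists_norm_le
  have fint : ∀ t, t ≤ T → Integrable (fun ω => f (θ t ω)) μ := by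
    intro t ht
    exact Integrable.of_bound (C := F) (hfc.measurable.comp (hθm' t ht)).aestronglyMeasurable
      (Filter.Eventually.of_forall fun ω => hF _ ⟨_, hθC t ht ω, rfl⟩)
  -- one-step inequality
  have step : ∀ t, t < T → ∀ U : Ω → EuclideanSpace ℝ (Fin d), Measurable[pastSigma ξ t] U →
      (∀ ω, U ω ∈ C) →
      ∫ ω, ‖θ (t+1) ω - U ω‖^2 ∂μ ≤ ∫ ω, ‖θ t ω - U ω‖^2 ∂μ
        - 2 * (D / (G * Real.sqrt (t+1))) * w * (∫ ω, f (θ t ω) ∂μ - ∫ ω, f (U ω) ∂μ)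
        + (D / (G * Real.sqrt (t+1)))^2 * G^2 := by
    intro t ht U hU hUC
    have := step_exp hξ hind hg ⟨t, ht⟩ hCc hC proj hp hf hd hM hl (θ t) U (hθm t ht.le) hU
      (hθC t ht.le) hUC (D / (G * Real.sqrt (t+1))) w σ (by positivity) hw.le
    rw [← hG] at this
    rw [hrec t ht]
    exact this
  have sqp : ∀ t : ℕ, 0 < Real.sqrt ((t:ℝ)+1) := fun t => Real.sqrt_pos.2 (by positivity)
  have Ile : ∀ Y Z : Ω → EuclideanSpace ℝ (Fin d), 
      (∀ ω, Y ω ∈ C) → (∀ ω, Z ω ∈ C) → (∫ ω, ‖Y ω - Z ω‖^2 ∂μ) / D^2 ≤ 1 := by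
    intro Y Z hY hZ
    rw [div_le_one (by positivity)]
    have : ∫ ω, ‖Y ω - Z ω‖^2 ∂μ ≤ ∫ ω, D^2 ∂μ := by
      apply integral_mono_of_nonneg (Filter.Eventually.of_forall fun ω => by positivity)
        (integrable_const _)
      refine Filter.Eventually.of_forall fun ω => ?_
      have := hdiam _ (hY ω) _ (hZ ω)
      show ‖Y ω - Z ω‖^2 ≤ D^2
      gcongr
    simpa using this
  have last := last_lemma (fun t => w * (∫ ω, f (θ t ω) ∂μ - f u) / (D * G))
    (fun s t => (∫ ω, ‖θ t ω - θ s ω‖^2 ∂μ) / D^2)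
    (fun t => (∫ ω, ‖θ t ω - u‖^2 ∂μ) / D^2) T hT
    (fun s t h h' => Ile _ _ (hθC t h') (hθC s (h.trans h')))
    (fun s t h h' => by positivity)
    (fun s => by simp)
    (fun t h' => Ile _ (fun _ => u) (hθC t h') (fun _ => hu))
    (fun t h' => by positivity)
    (fun s t h h' => by
      have := alg_step _ _ D G _ w _ hD hGp (sqp t)
        (step t h' (θ s) ((hθm s (by omega)).mono (pastSigma_mono h) le_rfl) (hθC s (by omega)))
      refine le_trans (le_of_eq ?_) this
      ring)
    (fun t h' => by
      have := alg_step _ _ D G _ w _ hD hGp (sqp t)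
        (step t h' (fun _ => u) measurable_const (fun _ => hu))
      simpa using this)
  -- last step
  have hTp : 0 < Real.sqrt (T:ℝ) := Real.sqrt_pos.2 (by exact_mod_cast hT)
  have hT1 : T - 1 + 1 = T := by omega
  have hT1' : ((T-1:ℕ):ℝ) + 1 = T := by exact_mod_cast hT1
  have hst := step (T-1) (by omega) (θ (T-1)) (hθm _ (by omega)) (hθC _ (by omega))
  rw [hT1, hT1'] at hst
  simp only [sub_self, norm_zero] at hst
  have hst' : ∫ ω, ‖θ T ω - θ (T-1) ω‖^2 ∂μ ≤ D^2 / (Real.sqrt T)^2 := by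
    refine hst.trans (le_of_eq ?_)
    simp only [ne_eq, OfNat.ofNat_ne_zero, not_false_eq_true, zero_pow, integral_zero, mul_zero,
      sub_zero, zero_add]
    field_simp
  have hwM : w * M ≤ G := by
    apply le_of_sq_le_sq _ hGp.le
    rw [hG]; nlinarith [mul_nonneg (sq_nonneg σ) (Nat.cast_nonneg (α := ℝ) d)]
  have hsqint : Integrable (fun ω => ‖θ T ω - θ (T-1) ω‖^2) μ := by
    have m1 := hθm' T le_rfl
    have m2 := hθm' (T-1) (by omega)
    refine Integrable.of_bound (C := D^2) (by fun_prop) (Filter.Eventually.of_forall fun ω => ?_)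
    have := hdiam _ (hθC T le_rfl ω) _ (hθC (T-1) (by omega) ω)
    rw [norm_pow, norm_norm]
    gcongr
  have hdiffr : w * (∫ ω, f (θ T ω) ∂μ - ∫ ω, f (θ (T-1) ω) ∂μ) ≤ D * G / Real.sqrt T := by
    rw [← integral_sub (fint T le_rfl) (fint (T-1) (by omega)), ← integral_const_mul]
    have : ∫ ω, w * (f (θ T ω) - f (θ (T-1) ω)) ∂μ ≤
        ∫ ω, (G * Real.sqrt T / (2 * D) * ‖θ T ω - θ (T-1) ω‖^2 + G * D / (2 * Real.sqrt T)) ∂μ := by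
      apply integral_mono
      · exact ((fint T le_rfl).sub (fint (T-1) (by omega))).const_mul _
      · exact (hsqint.const_mul _).add (integrable_const _)
      intro ω
      have a1 := (abs_le.1 (hl _ (hθC T le_rfl ω) _ (hθC (T-1) (by omega) ω))).2
      show w * (f (θ T ω) - f (θ (T-1) ω)) ≤
        G * Real.sqrt T / (2 * D) * ‖θ T ω - θ (T-1) ω‖^2 + G * D / (2 * Real.sqrt T)
      generalize ‖θ T ω - θ (T-1) ω‖ = x at *
      have hx0 : 0 ≤ x ∨ x < 0 := le_or_gt 0 x
      have a2 : w * (f (θ T ω) - f (θ (T-1) ω)) ≤ (w * M) * x := by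
        have := mul_le_mul_of_nonneg_left a1 hw.le
        linarith
      have a3 : (w * M) * x ≤ G * |x| := by
        have h1 : (w * M) * x ≤ (w*M) * |x| := by gcongr; exact le_abs_self x
        exact h1.trans (by gcongr)
      have a4 : G * |x| ≤ G * Real.sqrt T / (2 * D) * x^2 + G * D / (2 * Real.sqrt T) := by
        have e : G * Real.sqrt T / (2 * D) * x^2 + G * D / (2 * Real.sqrt T) - G * |x|
          = G / (2 * D * Real.sqrt T) * (Real.sqrt T * |x| - D)^2 := by
          rw [← sq_abs x]; field_simp; ring
        have : 0 ≤ G / (2 * D * Real.sqrt T) * (Real.sqrt T * |x| - D)^2 := by positivity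
        linarith
      linarith
    refine this.trans ?_
    rw [integral_add (hsqint.const_mul _) (integrable_const _), integral_const_mul]
    have h2 : G * Real.sqrt T / (2 * D) * ∫ ω, ‖θ T ω - θ (T-1) ω‖^2 ∂μ ≤
      G * Real.sqrt T / (2 * D) * (D^2 / (Real.sqrt T)^2) := by gcongr
    refine (add_le_add_left h2 _).trans (le_of_eq ?_)
    rw [integral_const]
    simp only [probReal_univ, one_smul]
    field_simp
    ring
  have hlast : w * (∫ ω, f (θ (T-1) ω) ∂μ - f u) ≤
      D * G * (3/2 / Real.sqrt T * (2 + Real.log T)) := by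
    have := (div_le_iff₀ (mul_pos hD hGp)).1 last
    linarith
  have hlog : 0 ≤ Real.log T := Real.log_natCast_nonneg T
  have hfin : D * G * (3/2 / Real.sqrt T * (2 + Real.log T)) + D * G / Real.sqrt T ≤
      4 * D * G * (1 + Real.log T) / Real.sqrt T := by
    have e : 4 * D * G * (1 + Real.log T) / Real.sqrt T -
      (D * G * (3/2 / Real.sqrt T * (2 + Real.log T)) + D * G / Real.sqrt T)
      = D * G / Real.sqrt T * (5/2 * Real.log T) := by field_simp; ring
    have : 0 ≤ D * G / Real.sqrt T * (5/2 * Real.log T) := by positivity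
    linarith
  linarith

theorem final_sum {m d : ℕ} (hm : 1 ≤ m) (hd : 1 ≤ d) (nn : Fin m → ℕ) (hn : ∀ i, 1 ≤ nn i)
    (N β Γ D : ℝ) (hN : 0 < N) (hβ : 0 < β) (hΓ : 0 < Γ) (hD : 0 < D) (w : Fin m → ℝ)
    (hw : ∀ i, w i = (nn i : ℝ) ^ (-(1 / 4 : ℝ)) /
          Real.sqrt ((∑ i', Real.sqrt (nn i')) / (N * β)))
    (T : ℕ) (hT : T = ⌈(2 / (d : ℝ)) * (∑ i, (nn i : ℝ) ^ 2) / (∑ i, 1 / w i ^ 2)⌉₊) :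
    (∀ i, 0 < w i) ∧ 1 ≤ T ∧ ∑ i, (4 * D * (Γ * Real.sqrt (w i ^ 2 * (nn i : ℝ) ^ 2 + T * d / 2))
      * (1 + Real.log T) / Real.sqrt T) / w i ≤
      8 * D * Γ * (1 + Real.log T) * Real.sqrt (m * d / (N * β)) *
          ∑ i, Real.sqrt (nn i) := by
  haveI : Nonempty (Fin m) := ⟨⟨0, hm⟩⟩
  have hn' : ∀ i, (0:ℝ) < nn i := fun i => by exact_mod_cast hn i
  set S := ∑ i, Real.sqrt (nn i) with hS
  have hSp : 0 < S := Finset.sum_pos (fun i _ => Real.sqrt_pos.2 (hn' i)) Finset.univ_nonempty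
  have hwp : ∀ i, 0 < w i := fun i => by
    rw [hw]
    have := Real.rpow_pos_of_pos (hn' i) (-(1/4:ℝ))
    positivity
  have hw2 : ∀ i, 1 / w i ^ 2 = Real.sqrt (nn i) * (S / (N * β)) := by
    intro i
    rw [hw, div_pow, Real.sq_sqrt (by positivity), ← Real.rpow_natCast, ← Real.rpow_mul (hn' i).le,
      one_div_div, Real.sqrt_eq_rpow]
    have : (-(1/4:ℝ)) * ((2:ℕ):ℝ) = -(1/2) := by norm_num
    rw [this, Real.rpow_neg (hn' i).le, div_inv_eq_mul, mul_comm]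
  have hW : ∑ i, 1 / w i ^ 2 = S^2 / (N * β) := by
    simp only [hw2]
    rw [← Finset.sum_mul]; ring
  set Q := ∑ i, (nn i : ℝ) ^ 2 with hQ
  have hQp : 0 < Q := Finset.sum_pos (fun i _ => by have := hn' i; positivity) Finset.univ_nonempty
  have hd0 : (0:ℝ) < d := by exact_mod_cast hd
  have hm0 : (0:ℝ) < m := by exact_mod_cast hm
  rw [hW] at hT
  have harg : 0 < (2 / (d : ℝ)) * Q / (S^2 / (N * β)) := by positivity
  have hT1 : 1 ≤ T := by rw [hT]; exact Nat.ceil_pos.2 harg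
  have hTle : (2 / (d : ℝ)) * Q / (S^2 / (N * β)) ≤ T := by rw [hT]; exact Nat.le_ceil _
  refine ⟨hwp, hT1, ?_⟩
  have hT0 : (0:ℝ) < T := by exact_mod_cast hT1
  have hTp : 0 < Real.sqrt (T:ℝ) := Real.sqrt_pos.2 hT0
  set R := Real.sqrt (m * d / (N * β)) * S with hR
  have hR0 : 0 ≤ R := by positivity
  have hR2 : R^2 = m * d / (N * β) * S^2 := by rw [hR, mul_pow, Real.sq_sqrt (by positivity)]
  -- sum of sizes
  have c1 : ∑ i, (nn i : ℝ) / Real.sqrt T ≤ R := by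
    rw [← Finset.sum_div, div_le_iff₀ hTp]
    apply le_of_sq_le_sq _ (by positivity)
    rw [mul_pow, Real.sq_sqrt hT0.le, hR2]
    have h1 : (∑ i, (nn i : ℝ))^2 ≤ m * Q := by
      have := sq_sum_le_card_mul_sum_sq (s := Finset.univ) (f := fun i => (nn i : ℝ))
      simpa using this
    refine h1.trans ?_
    have h2 : m * d / (N * β) * S^2 * ((2 / (d : ℝ)) * Q / (S^2 / (N * β))) ≤
      m * d / (N * β) * S^2 * T := by gcongr
    refine le_trans ?_ h2
    have : m * d / (N * β) * S^2 * ((2 / (d : ℝ)) * Q / (S^2 / (N * β))) = 2 * (m * Q) := by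
      field_simp
    rw [this]
    have : 0 < m * Q := by positivity
    linarith
  have c2 : ∑ i, Real.sqrt d * (1 / w i) ≤ R := by
    rw [← Finset.mul_sum]
    apply le_of_sq_le_sq _ hR0
    rw [mul_pow, Real.sq_sqrt hd0.le, hR2]
    have h1 : (∑ i, 1 / w i)^2 ≤ m * (S^2 / (N * β)) := by
      have := sq_sum_le_card_mul_sum_sq (s := Finset.univ) (f := fun i => 1 / w i)
      rw [← hW]
      simpa using this
    calc d * (∑ i, 1 / w i)^2 ≤ d * (m * (S^2 / (N * β))) := by gcongr
      _ = _ := by ring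
  have hlog : 0 ≤ Real.log T := Real.log_natCast_nonneg T
  have c3 : ∀ i, (4 * D * (Γ * Real.sqrt (w i ^ 2 * (nn i : ℝ) ^ 2 + T * d / 2))
      * (1 + Real.log T) / Real.sqrt T) / w i ≤
      4 * D * Γ * (1 + Real.log T) * ((nn i : ℝ) / Real.sqrt T + Real.sqrt d * (1 / w i)) := by
    intro i
    have hwi := hwp i
    have h1 : Real.sqrt (w i ^ 2 * (nn i : ℝ) ^ 2 + T * d / 2) ≤
        w i * nn i + Real.sqrt T * Real.sqrt d := by
      apply Real.sqrt_le_iff.2 ⟨by positivity, ?_⟩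
      have a1 := Real.sq_sqrt hT0.le
      have a2 := Real.sq_sqrt hd0.le
      have a3 : (Real.sqrt T * Real.sqrt d)^2 = T * d := by rw [mul_pow, a1, a2]
      have a4 : 0 ≤ (w i * nn i) * (Real.sqrt T * Real.sqrt d) := by positivity
      have a5 : 0 < (T:ℝ) * d := by positivity
      nlinarith
    calc _ ≤ (4 * D * (Γ * (w i * nn i + Real.sqrt T * Real.sqrt d))
      * (1 + Real.log T) / Real.sqrt T) / w i := by gcongr
      _ = _ := by field_simp
  refine (Finset.sum_le_sum fun i _ => c3 i).trans ?_
  rw [← Finset.mul_sum, Finset.sum_add_distrib]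
  have h0 : 0 ≤ 4 * D * Γ * (1 + Real.log T) := by positivity
  have := mul_le_mul_of_nonneg_left (add_le_add c1 c2) h0
  refine this.trans (le_of_eq ?_)
  rw [hR]; ring

/-- Theorem 5(b) with the adaptive weights made explicit: there is a universal constant
`K > 0` such that, with convex, differentiable, `Γ`-Lipschitz per-example losses on a
compact convex `C` of diameter `D`, adaptive weights
`w i = nᵢ^{-1/4} / √((∑ i', √n_{i'})/(N β̄))`, `T = ⌈(2/d)(∑ nᵢ²)/(∑ 1/wᵢ²)⌉`, independent
standard Gaussian noise, and noisy projected GD with step sizes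
`η i t = D/(Γ √(wᵢ² nᵢ² + T d/2) √t)`, the total excess empirical risk of the final
iterates is at most `K D Γ (1 + log T) √(m d/(N β̄)) ∑ i, √nᵢ`. -/
theorem stmt10 :
    ∃ K : ℝ, 0 < K ∧
      ∀ (d m : ℕ), 1 ≤ d → 1 ≤ m →
      ∀ nn : Fin m → ℕ, (∀ i, 1 ≤ nn i) →
      ∀ N βbar : ℝ, 0 < N → 0 < βbar →
      ∀ Γ : ℝ, 0 < Γ →
      ∀ C : Set (EuclideanSpace ℝ (Fin d)), C.Nonempty → IsCompact C → Convex ℝ C →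
      ∀ D : ℝ, 0 < D → Metric.diam C = D →
      ∀ ℓ : (i : Fin m) → Fin (nn i) → EuclideanSpace ℝ (Fin d) → ℝ,
        (∀ i j, ConvexOn ℝ Set.univ (ℓ i j)) →
        (∀ i j, Differentiable ℝ (ℓ i j)) →
        (∀ i j, ∀ x ∈ C, ∀ y ∈ C, |ℓ i j x - ℓ i j y| ≤ Γ * ‖x - y‖) →
      ∀ θstar : Fin m → EuclideanSpace ℝ (Fin d),
        (∀ i, θstar i ∈ C) → (∀ i, ∀ y ∈ C, (∑ j, ℓ i j (θstar i)) ≤ ∑ j, ℓ i j y) →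
      let w : Fin m → ℝ := fun i =>
        (nn i : ℝ) ^ (-(1 / 4 : ℝ)) /
          Real.sqrt ((∑ i', Real.sqrt (nn i')) / (N * βbar))
      ∀ T : ℕ, T = ⌈(2 / (d : ℝ)) * (∑ i, (nn i : ℝ) ^ 2) / (∑ i, 1 / w i ^ 2)⌉₊ →
      ∀ (Ω : Type) (_ : MeasureSpace Ω), IsProbabilityMeasure (ℙ : Measure Ω) →
      ∀ ξ : Fin m → Fin T → Ω → EuclideanSpace ℝ (Fin d),
        (∀ i t, Measurable (ξ i t)) →
        iIndepFun (m := fun _ => (inferInstance : MeasurableSpace ℝ))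
          (fun p : (Fin m × Fin T) × Fin d => fun ω => ξ p.1.1 p.1.2 ω p.2) ℙ →
        (∀ i t k, Measure.map (fun ω => ξ i t ω k) ℙ = gaussianReal 0 1) →
      ∀ proj : EuclideanSpace ℝ (Fin d) → EuclideanSpace ℝ (Fin d),
        (∀ x, proj x ∈ C ∧ ∀ y ∈ C, ‖x - proj x‖ ≤ ‖x - y‖) →
      ∀ θ : Fin m → ℕ → Ω → EuclideanSpace ℝ (Fin d),
        (∀ i, ∃ θ0 ∈ C, θ i 0 = fun _ => θ0) →
        (∀ i, ∀ t : ℕ, (ht : t < T) →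
          θ i (t + 1) = fun ω =>
            proj (θ i t ω -
              (D / (Γ * Real.sqrt (w i ^ 2 * (nn i : ℝ) ^ 2 + T * d / 2) *
                  Real.sqrt (t + 1))) •
                (w i • gradient (fun x => ∑ j, ℓ i j x) (θ i t ω) +
                  (Γ * Real.sqrt (T / 2)) • ξ i ⟨t, ht⟩ ω))) →
      (∑ i, ∫ ω, (∑ j, ℓ i j (θ i T ω)) ∂(ℙ : Measure Ω)) - (∑ i, ∑ j, ℓ i j (θstar i)) ≤
        K * D * Γ * (1 + Real.log T) * Real.sqrt (m * d / (N * βbar)) *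
          ∑ i, Real.sqrt (nn i) := by
  refine ⟨8, by norm_num, ?_⟩
  intro d m hd hm nn hn N β hN hβ Γ hΓ C hCne hCc hC D hD hdiam ℓ hconv hdiff hlip θs hθs hmin w T hT
    Ω _ hprob ξ hξ hind hg proj hp θ h0 hrec
  obtain ⟨hwp, hT1, hsum⟩ := final_sum hm hd nn hn N β Γ D hN hβ hΓ hD w (fun i => rfl) T hT
  refine le_trans ?_ hsum
  rw [← Finset.sum_sub_distrib]
  refine Finset.sum_le_sum fun i _ => ?_
  rw [le_div_iff₀ (hwp i), mul_comm]
  have hni : (0:ℝ) < nn i := by exact_mod_cast hn i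
  have hT0 : (0:ℝ) < T := by exact_mod_cast hT1
  have hd0 : (0:ℝ) < d := by exact_mod_cast hd
  have hwi := hwp i
  refine per_i hT1 (ξ := ξ i) (fun t => hξ i t) ?_ (fun t k => hg i t k) hCc hC hD ?_ proj hp
    (f := fun x => ∑ j, ℓ i j x) ?_ ?_ (M := nn i * Γ) (by positivity) ?_ (θs i) (hθs i)
    (w i) (Γ * Real.sqrt (T / 2)) (Γ * Real.sqrt (w i ^ 2 * (nn i : ℝ) ^ 2 + T * d / 2))
    hwi ?_ ?_ (θ i) (h0 i) (hrec i)
  · exact hind.precomp (g := fun p : Fin T × Fin d => ((i, p.1), p.2))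
      (fun a b hab => by simpa [Prod.ext_iff] using hab)
  · intro x hx y hy
    rw [← hdiam, ← dist_eq_norm]
    exact Metric.dist_le_diam_of_mem hCc.isBounded hx hy
  · have key : ∀ s : Finset (Fin (nn i)), ConvexOn ℝ Set.univ (fun x => ∑ j ∈ s, ℓ i j x) := by
      intro s
      induction s using Finset.induction_on with
      | empty => simpa using convexOn_const (0:ℝ) convex_univ
      | insert a s ha ih =>
        simp only [Finset.sum_insert ha]
        exact (hconv i a).add ih
    exact key _
  · exact Differentiable.fun_sum fun j _ => hdiff i j
  · intro x hx y hy
    rw [← Finset.sum_sub_distrib]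
    refine (Finset.abs_sum_le_sum_abs _ _).trans ?_
    refine (Finset.sum_le_sum fun j _ => hlip i j x hx y hy).trans (le_of_eq ?_)
    simp [mul_assoc]
  · positivity
  · rw [mul_pow, mul_pow, mul_pow, Real.sq_sqrt (by positivity), Real.sq_sqrt (by positivity)]
    ring
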